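/- arXiv:2206.15205 — 4 statements merged into one kernel-verified Lean document; each statement's English description precedes it below -/
import Mathlib

section
/- Let φ : ℝ → ℝ be convex and non-increasing (antitone), let S be a finite nonempty set of functions from a set X to ℝ, and fix x ∈ X. Then the supremum over pairs h, h' in the convex hull of S and over y ∈ {−1, +1} of |φ(y·h(x)) − φ(y·h'(x))| equals the maximum over pairs h, h' ∈ S and y ∈ {−1, +1} of |φ(y·h(x)) − φ(y·h'(x))|. In particular, every pair in the convex hull achieves disagreement at most this finite maximum, and the maximum is attained by a pair in S. -/
/-- A bound on the values at `x` of the members of `S` persists on the convex hull of `S`. -/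
theorem apply_mem_Icc_of_mem_convexHull {X : Type*} {S : Set (X → ℝ)} {x : X} {a b : ℝ}
    (hS : ∀ f ∈ S, f x ∈ Set.Icc a b) {h : X → ℝ} (hh : h ∈ convexHull ℝ S) :
    h x ∈ Set.Icc a b :=
  convexHull_min (t := LinearMap.proj (R := ℝ) (φ := fun _ : X => ℝ) x ⁻¹' Set.Icc a b) hS
    ((convex_Icc a b).linear_preimage _) hh

/-- An antitone function oscillates on an interval by at most its change between the endpoints. -/
theorem Antitone.abs_sub_le_abs_sub_endpoints {φ : ℝ → ℝ} (hφ : Antitone φ) {a b s t : ℝ}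
    (hs : s ∈ Set.Icc a b) (ht : t ∈ Set.Icc a b) : |φ s - φ t| ≤ |φ a - φ b| := by
  refine le_trans ?_ (le_abs_self _)
  rw [abs_sub_le_iff]
  constructor <;> linarith [hφ hs.1, hφ hs.2, hφ ht.1, hφ ht.2]

/-- Lemma 5.1: For a convex, non-increasing `φ : ℝ → ℝ`, a finite nonempty set `S`
of hypotheses `X → ℝ`, and a fixed `x : X`, the supremum over pairs in the convex hull of `S`
and labels `y ∈ {-1, 1}` of the pointwise loss disagreement `|φ (y * h x) - φ (y * h' x)|`
equals the maximum over pairs in `S` and `y ∈ {-1, 1}`; i.e. this maximum is a greatest element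
of the set of all disagreement values over the convex hull, and it is attained on `S`. -/
theorem convexHull_max_error_disagreement
    {X : Type*} (φ : ℝ → ℝ) (hconv : ConvexOn ℝ Set.univ φ) (hanti : Antitone φ)
    (S : Set (X → ℝ)) (hSfin : S.Finite) (hSne : S.Nonempty) (x : X) :
    ∃ h₁ ∈ S, ∃ h₂ ∈ S, ∃ y ∈ ({-1, 1} : Set ℝ),
      IsGreatest
        {d : ℝ | ∃ h ∈ convexHull ℝ S, ∃ h' ∈ convexHull ℝ S, ∃ y' ∈ ({-1, 1} : Set ℝ),
          d = |φ (y' * h x) - φ (y' * h' x)|}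
        |φ (y * h₁ x) - φ (y * h₂ x)| := by
  obtain ⟨f, hf, hfmin⟩ := Set.exists_min_image S (fun h => h x) hSfin hSne
  obtain ⟨g, hg, hgmax⟩ := Set.exists_max_image S (fun h => h x) hSfin hSne
  have hull : ∀ h ∈ convexHull ℝ S, h x ∈ Set.Icc (f x) (g x) := fun h hh =>
    apply_mem_Icc_of_mem_convexHull (fun k hk => ⟨hfmin k hk, hgmax k hk⟩) hh
  have endpoints : ∀ y ∈ ({-1, 1} : Set ℝ), ∀ h ∈ convexHull ℝ S, ∀ h' ∈ convexHull ℝ S,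
      |φ (y * h x) - φ (y * h' x)| ≤ |φ (y * f x) - φ (y * g x)| := by
    rintro y (rfl | rfl) h hh h' hh'
    · rw [abs_sub_comm (φ (-1 * f x))]
      simp only [neg_one_mul]
      exact hanti.abs_sub_le_abs_sub_endpoints (Set.neg_mem_Icc_iff.2 (by simpa using hull h hh))
        (Set.neg_mem_Icc_iff.2 (by simpa using hull h' hh'))
    · simp only [one_mul]
      exact hanti.abs_sub_le_abs_sub_endpoints (hull h hh) (hull h' hh')
  obtain ⟨y, hy, hymax⟩ := Set.exists_max_image ({-1, 1} : Set ℝ)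
    (fun y => |φ (y * f x) - φ (y * g x)|) (Set.toFinite _) ⟨1, by simp⟩
  refine ⟨f, hf, g, hg, y, hy,
    ⟨f, subset_convexHull ℝ S hf, g, subset_convexHull ℝ S hg, y, hy, rfl⟩, ?_⟩
  rintro _ ⟨h, hh, h', hh', y', hy', rfl⟩
  exact (endpoints y' hy' h hh h' hh').trans (hymax y' hy')
end

section
/- Let (Ω, ℱ, P) be a probability space and let 𝔪₁ ⊆ 𝔪₂ ⊆ ℱ be sub-σ-algebras. Let Z : Ω → ℝ be bounded and 𝔪₂-measurable such that the σ-algebra generated by Z is independent of 𝔪₁. Let p : Ω → ℝ be 𝔪₂-measurable with 0 < p ≤ 1 almost everywhere, and let Q : Ω → ℝ be integrable, take values in {0, 1}, and satisfy E[Q ∣ 𝔪₂] = p almost everywhere. Then E[(Q/p)·Z ∣ 𝔪₁] = E[Z] almost everywhere (a constant). -/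
open MeasureTheory ProbabilityTheory

/-- Defining property of the Lebesgue conditional expectation, tested against measurable
functions. -/
lemma lintegral_condLExp_mul {Ω : Type*} {m m0 : MeasurableSpace Ω} {μ : Measure Ω}
    (hm : m ≤ m0) [SigmaFinite (μ.trim hm)] {f g : Ω → ENNReal} (hf : AEMeasurable f μ)
    (hg : Measurable[m] g) :
    ∫⁻ ω, (μ⁻[f|m]) ω * g ω ∂μ = ∫⁻ ω, f ω * g ω ∂μ := by
  have hg0 : Measurable g := hg.mono hm le_rfl
  have hf' : AEMeasurable (μ⁻[f|m]) μ := by fun_prop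
  have htrim : (μ.withDensity (μ⁻[f|m])).trim hm = (μ.withDensity f).trim hm := by
    refine @Measure.ext _ m _ _ fun s hs => ?_
    rw [trim_measurableSet_eq hm hs, trim_measurableSet_eq hm hs,
      withDensity_apply _ (hm s hs), withDensity_apply _ (hm s hs),
      setLIntegral_condLExp hm _ _ hs]
  have hleft := lintegral_withDensity_eq_lintegral_mul₀ hf' hg0.aemeasurable
  have hright := lintegral_withDensity_eq_lintegral_mul₀ hf hg0.aemeasurable
  simp only [Pi.mul_apply] at hleft hright
  rw [← hleft, ← hright, ← lintegral_trim hm hg, htrim, lintegral_trim hm hg]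

/-- For nonnegative `f` and `m`-measurable `g`, integrability of `μ[f|m] * g` implies that of
`f * g`. -/
lemma integrable_mul_of_integrable_condExp_mul {Ω : Type*} {m m0 : MeasurableSpace Ω}
    {μ : Measure Ω} (hm : m ≤ m0) [SigmaFinite (μ.trim hm)] {f g : Ω → ℝ}
    (hf : Integrable f μ) (hf0 : 0 ≤ᵐ[μ] f) (hg : Measurable[m] g)
    (hfg : Integrable (μ[f|m] * g) μ) : Integrable (f * g) μ := by
  refine ⟨hf.1.mul (hg.mono hm le_rfl).aestronglyMeasurable, ?_⟩
  have hlt := hfg.2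
  rw [HasFiniteIntegral] at hlt ⊢
  convert hlt using 1
  calc ∫⁻ ω, ‖(f * g) ω‖ₑ ∂μ
      = ∫⁻ ω, ENNReal.ofReal (f ω) * ‖g ω‖ₑ ∂μ := by
        refine lintegral_congr_ae ?_
        filter_upwards [hf0] with ω hω
        rw [Pi.mul_apply, enorm_mul, Real.enorm_of_nonneg hω]
    _ = ∫⁻ ω, (μ⁻[fun ω => ENNReal.ofReal (f ω)|m]) ω * ‖g ω‖ₑ ∂μ :=
        (lintegral_condLExp_mul hm hf.1.aemeasurable.ennreal_ofReal
          (measurable_enorm.comp hg)).symm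
    _ = ∫⁻ ω, ‖(μ[f|m] * g) ω‖ₑ ∂μ := by
        refine lintegral_congr_ae ?_
        filter_upwards [condLExp_ofReal m hf hf0, condExp_nonneg (m := m) hf0] with ω hω h0
        rw [hω, Pi.mul_apply, enorm_mul, Real.enorm_of_nonneg h0]

/-- martingale-difference computation in the proof of Lemma 4.1: With
sub-σ-algebras `m₁ ≤ m₂`, a bounded `m₂`-measurable `Z` whose generated σ-algebra is
independent of `m₁`, an `m₂`-measurable query probability `p` with `0 < p ≤ 1` a.e., and a
`{0,1}`-valued integrable `Q` with `E[Q ∣ m₂] = p` a.e., one has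
`E[(Q / p) · Z ∣ m₁] = E[Z]` almost everywhere. -/
theorem importance_weighted_condexp_eq_integral
    {Ω : Type*} [m0 : MeasurableSpace Ω] (μ : Measure Ω) [IsProbabilityMeasure μ]
    (m₁ m₂ : MeasurableSpace Ω) (h12 : m₁ ≤ m₂) (h2 : m₂ ≤ m0)
    (Z : Ω → ℝ) (hZmeas : Measurable[m₂] Z) (hZbdd : ∃ C : ℝ, ∀ ω, |Z ω| ≤ C)
    (hZindep : Indep (MeasurableSpace.comap Z inferInstance) m₁ μ)
    (p : Ω → ℝ) (hpmeas : Measurable[m₂] p)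
    (hp : ∀ᵐ ω ∂μ, 0 < p ω ∧ p ω ≤ 1)
    (Q : Ω → ℝ) (hQint : Integrable Q μ) (hQval : ∀ ω, Q ω = 0 ∨ Q ω = 1)
    (hQcond : μ[Q|m₂] =ᵐ[μ] p) :
    μ[fun ω => Q ω / p ω * Z ω|m₁] =ᵐ[μ] fun _ => ∫ ω, Z ω ∂μ := by
  have hm₁ : m₁ ≤ m0 := h12.trans h2
  obtain ⟨C, hC⟩ := hZbdd
  have hZm0 : Measurable[m0] Z := hZmeas.mono h2 le_rfl
  have hZint : Integrable Z μ :=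
    .of_bound hZm0.aestronglyMeasurable C (.of_forall hC)
  have hg : Measurable[m₂] fun ω => Z ω / p ω := hZmeas.div hpmeas
  have hpg : μ[Q|m₂] * (fun ω => Z ω / p ω) =ᵐ[μ] Z := by
    filter_upwards [hQcond, hp] with ω hω hpω
    rw [Pi.mul_apply, hω, mul_div_cancel₀ _ hpω.1.ne']
  have hQ0 : 0 ≤ᵐ[μ] Q := .of_forall fun ω => by
    rcases hQval ω with h | h <;> simp [h]
  have hint : Integrable (Q * fun ω => Z ω / p ω) μ :=
    integrable_mul_of_integrable_condExp_mul h2 hQint hQ0 hg (hZint.congr hpg.symm)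
  have hrw : (fun ω => Q ω / p ω * Z ω) = Q * fun ω => Z ω / p ω := by
    ext ω
    simp only [Pi.mul_apply]
    ring
  have hcond : μ[Q * fun ω => Z ω / p ω|m₂] =ᵐ[μ] Z :=
    (condExp_mul_of_aestronglyMeasurable_right
      hg.stronglyMeasurable.aestronglyMeasurable hint hQint).trans hpg
  rw [hrw]
  calc μ[Q * fun ω => Z ω / p ω|m₁]
      =ᵐ[μ] μ[μ[Q * fun ω => Z ω / p ω|m₂]|m₁] := (condExp_condExp_of_le h12 h2).symm
    _ =ᵐ[μ] μ[Z|m₁] := condExp_congr_ae hcond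
    _ =ᵐ[μ] fun _ => ∫ ω, Z ω ∂μ :=
        condExp_indep_eq hZm0.comap_le hm₁
          (comap_measurable Z).stronglyMeasurable hZindep
end

section
/- Let V be a set of hypotheses, R : V → ℝ, 𝓛 : V → V → ℝ, and T ≥ 1. For each t ∈ {1, …, T} let H_t ⊆ V, L_t : V → ℝ, Δ_t ≥ 0, h^𝒯_t ∈ V, and let ĥ_t ∈ H_t satisfy L_t(ĥ_t) ≤ L_t(h) for all h ∈ H_t. Define H'_t = {h ∈ H_t : L_t(h) ≤ L_t(ĥ_t) + (1 + 𝓛(h^𝒯_t, ĥ_t))·Δ_t}. Assume: (i) h^𝒯_1 ∈ H_1; (ii) for each t < T, H_{t+1} = H'_t ∪ H̃_t for some set H̃_t ⊆ V, and h^𝒯_{t+1} ∈ {h^𝒯_t} ∪ H̃_t; (iii) for each t, the concentration event: for all h, h' ∈ H_t, |(L_t(h) − L_t(h')) − (R(h) − R(h'))| ≤ (1 + 𝓛(h, h'))·Δ_t; and (iv) for each t, R(h^𝒯_t) ≤ R(h) for every h ∈ H_t. Then h^𝒯_t ∈ H_t for every t ∈ {1, …, T}. -/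
/-- Theorem 5.4, part 1: in teaching-based hypothesis pruning with
self-improvement, on the concentration events, the (possibly updated) teaching hypothesis
`hTeach t` is maintained in the candidate hypothesis set `H t` at every round `t ∈ {1, …, T}`.
Here `H' t` is the pruned set, `H (t+1) = H' t ∪ Htil t` with `Htil t` the newly generated
hypotheses, `hTeach (t+1) ∈ {hTeach t} ∪ Htil t`, and `hTeach t` minimizes `R` over `H t`. -/
theorem self_improving_teacher_maintained
    {V : Type*} (R : V → ℝ) (𝓛 : V → V → ℝ) (T : ℕ) (hT : 1 ≤ T)
    (H : ℕ → Set V) (L : ℕ → V → ℝ) (Δ : ℕ → ℝ) (hΔ : ∀ t, 0 ≤ Δ t)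
    (hTeach : ℕ → V) (hhat : ℕ → V)
    (hhatmem : ∀ t, 1 ≤ t → t ≤ T → hhat t ∈ H t)
    (hhatmin : ∀ t, 1 ≤ t → t ≤ T → ∀ h ∈ H t, L t (hhat t) ≤ L t h)
    (H' : ℕ → Set V)
    (hH' : ∀ t, 1 ≤ t → t ≤ T →
      H' t = {h ∈ H t | L t h ≤ L t (hhat t) + (1 + 𝓛 (hTeach t) (hhat t)) * Δ t})
    (hinit : hTeach 1 ∈ H 1)
    (Htil : ℕ → Set V)
    (hstep : ∀ t, 1 ≤ t → t < T → H (t + 1) = H' t ∪ Htil t)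
    (hTstep : ∀ t, 1 ≤ t → t < T → hTeach (t + 1) ∈ insert (hTeach t) (Htil t))
    (hconc : ∀ t, 1 ≤ t → t ≤ T → ∀ h ∈ H t, ∀ h' ∈ H t,
      |(L t h - L t h') - (R h - R h')| ≤ (1 + 𝓛 h h') * Δ t)
    (hopt : ∀ t, 1 ≤ t → t ≤ T → ∀ h ∈ H t, R (hTeach t) ≤ R h) :
    ∀ t, 1 ≤ t → t ≤ T → hTeach t ∈ H t := by
  intro t ht
  induction t, ht using Nat.le_induction with
  | base => exact fun _ => hinit
  | succ t ht ih =>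
    intro hlt
    have htT : t ≤ T := Nat.le_of_succ_le hlt
    have hmem := ih htT
    rw [hstep t ht hlt]
    rcases hTstep t ht hlt with heq | hnew
    · left
      rw [heq, hH' t ht htT]
      refine ⟨hmem, ?_⟩
      have hdev := (abs_le.mp (hconc t ht htT _ hmem _ (hhatmem t ht htT))).2
      have hR := hopt t ht htT _ (hhatmem t ht htT)
      linarith
    · exact Or.inr hnew
end

section
/- Let Y be a finite nonempty type, μ a probability measure on X × Y for a measurable space X, and ℓ : ℝ × Y → ℝ a loss with values in [0,1]. Let 𝓗 be a finite set of measurable hypotheses h : X → ℝ, define ρ(h, h') = ∫ |ℓ(h(x), y) − ℓ(h'(x), y)| dμ(x, y), fix h^𝒯 ∈ 𝓗 and r > 0, and let B(h^𝒯, r) = {h ∈ 𝓗 : ρ(h, h^𝒯) ≤ r}. Suppose θ ∈ ℝ satisfies θ ≥ (1/r) ∫ max_{h ∈ B(h^𝒯, r)} max_{y' ∈ Y} |ℓ(h(x), y') − ℓ(h^𝒯(x), y')| dμ(x, y). Then for any nonempty H ⊆ B(h^𝒯, r), the expected query probability satisfies ∫ max_{h, h' ∈ H} max_{y' ∈ Y}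 |ℓ(h(x), y') − ℓ(h'(x), y')| dμ(x, y) ≤ 2·θ·r. -/
open MeasureTheory

/-- The disagreement `ρ(h, h') = ∫ |ℓ(h(x), y) − ℓ(h'(x), y)| dμ(x, y)`. -/
noncomputable def rho {X Y : Type*} [MeasurableSpace X] [MeasurableSpace Y]
    (μ : Measure (X × Y)) (ℓ : ℝ → Y → ℝ) (h h' : X → ℝ) : ℝ :=
  ∫ p, |ℓ (h p.1) p.2 - ℓ (h' p.1) p.2| ∂μ

/-- central step of the label-complexity proof of Theorem 4.3: if the error
disagreement coefficient `θ` satisfies its defining inequality at radius `r` around the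
teaching hypothesis `hT`, then for any nonempty candidate set `H` contained in the ρ-ball
`B(hT, r)` (taken inside the finite class `𝓗`), the expected query probability — the expected
maximum pairwise error disagreement over `H` — is at most `2 · θ · r`. (The nonemptiness of
the ball `hBne` is automatic since `hT` itself belongs to it.) -/
theorem expected_query_probability_le_two_theta_r
    {X Y : Type*} [MeasurableSpace X] [MeasurableSpace Y] [Fintype Y] [Nonempty Y]
    (μ : Measure (X × Y)) [IsProbabilityMeasure μ]
    (ℓ : ℝ → Y → ℝ) (hℓ : ∀ z y, ℓ z y ∈ Set.Icc (0 : ℝ) 1)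
    (𝓗 : Finset (X → ℝ)) (hmeas : ∀ h ∈ 𝓗, Measurable h)
    (hT : X → ℝ) (hT𝓗 : hT ∈ 𝓗) (r : ℝ) (hr : 0 < r)
    (hBne : (𝓗.filter fun h => rho μ ℓ h hT ≤ r).Nonempty)
    (θ : ℝ)
    (hθint : Integrable
      (fun p : X × Y => (𝓗.filter fun h => rho μ ℓ h hT ≤ r).sup' hBne fun h =>
        Finset.univ.sup' Finset.univ_nonempty fun y' : Y =>
          |ℓ (h p.1) y' - ℓ (hT p.1) y'|) μ)
    (hθ : θ ≥ (1 / r) *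
      ∫ p, (𝓗.filter fun h => rho μ ℓ h hT ≤ r).sup' hBne
        (fun h => Finset.univ.sup' Finset.univ_nonempty fun y' : Y =>
          |ℓ (h p.1) y' - ℓ (hT p.1) y'|) ∂μ)
    (H : Finset (X → ℝ)) (hHne : H.Nonempty)
    (hHsub : H ⊆ 𝓗.filter fun h => rho μ ℓ h hT ≤ r)
    (hint : Integrable
      (fun p : X × Y => (H ×ˢ H).sup' (hHne.product hHne) fun hh =>
        Finset.univ.sup' Finset.univ_nonempty fun y' : Y =>
          |ℓ (hh.1 p.1) y' - ℓ (hh.2 p.1) y'|) μ) :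
    (∫ p, (H ×ˢ H).sup' (hHne.product hHne)
        (fun hh => Finset.univ.sup' Finset.univ_nonempty fun y' : Y =>
          |ℓ (hh.1 p.1) y' - ℓ (hh.2 p.1) y'|) ∂μ) ≤ 2 * θ * r := by
  set B := 𝓗.filter fun h => rho μ ℓ h hT ≤ r
  set D : X × Y → ℝ := fun p => B.sup' hBne fun h =>
    Finset.univ.sup' Finset.univ_nonempty fun y' : Y => |ℓ (h p.1) y' - ℓ (hT p.1) y'|
  have disagreement_le : ∀ p : X × Y, ∀ h ∈ H, ∀ y, |ℓ (h p.1) y - ℓ (hT p.1) y| ≤ D p := by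
    intro p h hh y
    exact (Finset.le_sup' (fun y' : Y => |ℓ (h p.1) y' - ℓ (hT p.1) y'|)
      (Finset.mem_univ y)).trans
      (Finset.le_sup' (fun h : X → ℝ => Finset.univ.sup' Finset.univ_nonempty
        fun y' : Y => |ℓ (h p.1) y' - ℓ (hT p.1) y'|) (hHsub hh))
  have integral_le : ∫ p, D p ∂μ ≤ θ * r := by
    rwa [ge_iff_le, one_div_mul_eq_div, div_le_iff₀ hr] at hθ
  calc _ ≤ ∫ p, 2 * D p ∂μ := by
        refine integral_mono hint (hθint.const_mul 2) fun p => ?_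
        refine Finset.sup'_le _ _ fun hh hhH => Finset.sup'_le _ _ fun y _ => ?_
        obtain ⟨h₁, h₂⟩ := Finset.mem_product.mp hhH
        have triangle := abs_sub_le (ℓ (hh.1 p.1) y) (ℓ (hT p.1) y) (ℓ (hh.2 p.1) y)
        rw [abs_sub_comm (ℓ (hT p.1) y)] at triangle
        linarith [disagreement_le p _ h₁ y, disagreement_le p _ h₂ y]
    _ = 2 * ∫ p, D p ∂μ := integral_const_mul _ _
    _ ≤ 2 * θ * r := by linarith
end
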